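/- arXiv:1611.09060 — 2 statements merged into one kernel-verified Lean document; each statement's English description precedes it below -/
import Mathlib

section
/- For every finite simple graph H with at least one edge, there exists an integer d such that every finite simple graph with no H minor is (τ(H), d)-colourable, where τ(H) is the vertex cover number of H. -/
/-! Fix a minimum vertex cover `T` of `H`. If every nonempty subgraph of `G` has a vertex of degree
less than `τ(H)` or an edge both of whose ends have degree at most `d`, then deleting such a vertex
or edge shows by induction that `G` can be coloured from lists of size `τ(H)` with defect `d`:
a deleted vertex gets a colour absent from its neighbourhood, and a deleted edge only affects the
defect of vertices whose degree is already at most `d`.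

So let `G` be `H`-minor-free with minimum degree at least `τ(H)`, and suppose that its set `A` of
vertices of degree at most `d` is independent. Every vertex of `A` then has at least `τ(H)`
neighbours in `B = Aᶜ`. Contract vertices of `A` one at a time into `B`, each time creating a new
edge inside `B`, until all remaining vertices of `A` are attached to cliques of `B`. By Mader's
theorem the graph on `B` is degenerate and has linearly many edges, hence linearly many cliques, so
there are `O(|B|)` contractions. If more than `O(|B|)` vertices remained, then `|V(H)|` of them
would be attached to the same clique of size `τ(H)`, and this clique in the role of `T` would
give `H`. Therefore `|A| = O(|B|)`, and for large `d` the degrees in `B` contradict the linear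
bound on the number of edges of `G`.
-/

open SimpleGraph

universe u v

section Defs

variable {V : Type u} {α : Type v}

/-- `H` is isomorphic to a subgraph of `G`: there is an injective graph homomorphism. -/
def ContainsSubgraph (G : SimpleGraph V) (H : SimpleGraph α) : Prop :=
  ∃ f : H →g G, Function.Injective f

/-- `G` is `(k,d)`-choosable: for every assignment of lists of exactly `k` colours there is a
colouring from the lists in which every vertex has at most `d` neighbours of its own colour. -/
def Choosable (G : SimpleGraph V) (k : ℕ) (d : ℤ) : Prop :=
  ∀ L : V → Finset ℕ, (∀ v, (L v).card = k) →
    ∃ c : V → ℕ, (∀ v, c v ∈ L v) ∧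
      ∀ v, (({w | G.Adj v w ∧ c w = c v}.ncard : ℤ)) ≤ d

/-- `G` is `(k,d)`-colourable: the vertices can be `k`-coloured with every vertex having at most
`d` neighbours of its own colour. -/
def DefColorable (G : SimpleGraph V) (k d : ℕ) : Prop :=
  ∃ c : V → Fin k, ∀ v, {w | G.Adj v w ∧ c w = c v}.ncard ≤ d

/-- `H` is a minor of `G`, via pairwise disjoint connected branch sets. -/
def IsMinor (H : SimpleGraph α) (G : SimpleGraph V) : Prop :=
  ∃ B : α → Set V,
    (∀ a, (B a).Nonempty) ∧
    (∀ a, (G.induce (B a)).Connected) ∧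
    (Pairwise fun a b => Disjoint (B a) (B b)) ∧
    (∀ a b, H.Adj a b → ∃ x ∈ B a, ∃ y ∈ B b, G.Adj x y)

/-- A subdivision of `H` whose path lengths all satisfy `lenOK` occurs as a subgraph of `G`:
the branch vertices are embedded injectively by `f`, each edge of `H` is replaced by a path of
`G` between the corresponding branch vertices, internal vertices of these paths avoid branch
vertices, and distinct paths meet only in common endpoints. -/
def HasSubdivWith (G : SimpleGraph V) (H : SimpleGraph α) (lenOK : ℕ → Prop) : Prop :=
  ∃ f : α → V, Function.Injective f ∧
    ∃ P : ∀ ⦃a b : α⦄, H.Adj a b → G.Walk (f a) (f b),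
      (∀ ⦃a b⦄ (h : H.Adj a b), (P h).IsPath ∧ lenOK (P h).length) ∧
      (∀ ⦃a b⦄ (h : H.Adj a b) (c : α), f c ∈ (P h).support → c = a ∨ c = b) ∧
      (∀ ⦃a b⦄ (h : H.Adj a b) ⦃a' b'⦄ (h' : H.Adj a' b'), s(a, b) ≠ s(a', b') →
        ∀ x ∈ (P h).support, x ∈ (P h').support →
          (x = f a ∨ x = f b) ∧ (x = f a' ∨ x = f b'))

/-- Some `(≤ k)`-subdivision of `H` (each edge replaced by a path of length at most `k+1`)
is a subgraph of `G`. -/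
def HasSubdivLE (G : SimpleGraph V) (k : ℕ) (H : SimpleGraph α) : Prop :=
  HasSubdivWith G H fun L => L ≤ k + 1

/-- `H` is a topological minor of `G`: some subdivision of `H` is a subgraph of `G`. -/
def HasTopMinor (G : SimpleGraph V) (H : SimpleGraph α) : Prop :=
  HasSubdivWith G H fun _ => True

/-- The exact `1`-subdivision of `H`: every edge is subdivided exactly once. -/
def exactOneSubdivision (H : SimpleGraph α) : SimpleGraph (α ⊕ H.edgeSet) :=
  SimpleGraph.fromRel fun x y =>
    match x, y with
    | Sum.inl a, Sum.inr e => a ∈ (e : Sym2 α)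
    | _, _ => False

/-- The graph `K*_{s,t}`: `K_{s,t}` together with `binom s 2` new vertices, each adjacent to a
distinct pair of vertices on the side of size `s`. -/
def KstarGraph (s t : ℕ) :
    SimpleGraph (Fin s ⊕ (Fin t ⊕ {p : Fin s × Fin s // p.1 < p.2})) :=
  SimpleGraph.fromRel fun x y =>
    match x, y with
    | Sum.inl _, Sum.inr (Sum.inl _) => True
    | Sum.inl a, Sum.inr (Sum.inr c) => a = c.1.1 ∨ a = c.1.2
    | _, _ => False

/-- The auxiliary function `N₁(s,t,δ,δ₁)`. -/
noncomputable def N1 (s t : ℕ) (δ δ₁ : ℝ) : ℝ :=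
  if s = 1 then (t : ℝ) - 1
  else if s = 2 then (δ - 2) * δ₁ * t / 2 + δ
  else (δ - s) * ((Nat.choose ⌊δ₁⌋₊ (s - 1) : ℝ) * ((t : ℝ) - 1) + δ₁ / 2) + δ

/-- The maximum average degree of `G`: maximum of `2|E(H)|/|V(H)|` over nonempty subgraphs. -/
noncomputable def mad [Fintype V] (G : SimpleGraph V) : ℝ :=
  sSup {q : ℝ | ∃ H : G.Subgraph, H.verts.Nonempty ∧
    q = 2 * (H.edgeSet.ncard : ℝ) / (H.verts.ncard : ℝ)}

/-- `∇₀(G)`: maximum of `|E(H)|/|V(H)|` over nonempty subgraphs of `G`. -/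
noncomputable def nabla0 [Fintype V] (G : SimpleGraph V) : ℝ :=
  sSup {q : ℝ | ∃ H : G.Subgraph, H.verts.Nonempty ∧
    q = (H.edgeSet.ncard : ℝ) / (H.verts.ncard : ℝ)}

/-- `∇₁(G)`: maximum of `|E(H)|/|V(H)|` over graphs `H` some `(≤2)`-subdivision of which is a
subgraph of `G`. -/
noncomputable def nabla1 [Fintype V] (G : SimpleGraph V) : ℝ :=
  sSup {q : ℝ | ∃ (n : ℕ) (H : SimpleGraph (Fin n)), 0 < n ∧
    HasSubdivLE G 2 H ∧ q = (H.edgeSet.ncard : ℝ) / (n : ℝ)}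

end Defs

/-- The vertex type of the graph `G(s,N)` (here indexed by `t = s - 2`). -/
def GVert : ℕ → ℕ → Type
  | 0, N => Fin (N + 2)
  | t + 1, N => Option (Fin (N + 1) × GVert t N)

/-- The graph `G(s,N)` (indexed by `t = s - 2`): `GGraph 0 N = G(2,N) = K_{1,N+1}`, and
`GGraph (t+1) N = G(t+3,N)` is obtained from `N+1` disjoint copies of `GGraph t N` by adding
a dominant vertex. -/
def GGraph : (t : ℕ) → (N : ℕ) → SimpleGraph (GVert t N)
  | 0, N => SimpleGraph.fromRel fun i j => i = (0 : Fin (N + 2))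
  | t + 1, N => SimpleGraph.fromRel fun x y =>
      match x, y with
      | none, some _ => True
      | some (i, a), some (j, b) => i = j ∧ (GGraph t N).Adj a b
      | _, _ => False

section More

variable {V : Type u} {α : Type v}

/-- `r` is a forest order witnessing that `H` is a subgraph of the closure of a rooted forest:
`r` is a partial order in which the set of ancestors of each vertex is a chain, and adjacent
vertices of `H` are comparable. -/
def IsForestOrder (H : SimpleGraph α) (r : α → α → Prop) : Prop :=
  IsPartialOrder α r ∧ (∀ v : α, IsChain r {u | r u v}) ∧
    (∀ x y, H.Adj x y → r x y ∨ r y x)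

/-- The tree-depth of `H`: the minimum height of a rooted forest whose closure contains `H`
as a subgraph (the height being measured as the maximum number of vertices on a
root--to--leaf path). -/
noncomputable def treeDepth (H : SimpleGraph α) : ℕ :=
  sInf {k | ∃ r : α → α → Prop, IsForestOrder H r ∧ ∀ v, {u | r u v}.ncard ≤ k}

/-- The vertex cover number `τ(H)`. -/
noncomputable def vertexCoverNumber (H : SimpleGraph α) : ℕ :=
  sInf {k | ∃ S : Set α, S.ncard = k ∧ ∀ ⦃x y⦄, H.Adj x y → x ∈ S ∨ y ∈ S}

/-- The graph obtained from `ℓ` disjoint copies of the star `K_{1,k}` by adding one dominant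
vertex. -/
def Hlk (l k : ℕ) : SimpleGraph (Option (Fin l × Fin (k + 1))) :=
  SimpleGraph.fromRel fun x y =>
    match x, y with
    | none, some _ => True
    | some (i, a), some (j, _) => i = j ∧ a = 0
    | _, _ => False

/-- The star `K_{1,k}` together with `m` isolated vertices. -/
def StarPlusIsolated (k m : ℕ) : SimpleGraph (Fin (k + 1) ⊕ Fin m) :=
  SimpleGraph.fromRel fun x y =>
    match x, y with
    | Sum.inl i, Sum.inl _ => i = 0
    | _, _ => False

/-- `G` admits a `k`-stack layout: a linear ordering of the vertices (given by an injection
into `ℕ`) and an assignment of the edges to `k` stacks so that no two edges in a common stack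
cross. -/
def HasStackLayout (G : SimpleGraph V) (k : ℕ) : Prop :=
  ∃ f : V → ℕ, Function.Injective f ∧
    ∃ σ : Sym2 V → Fin k,
      ∀ a b c d : V, G.Adj a b → G.Adj c d → σ s(a, b) = σ s(c, d) →
        ¬(f a < f c ∧ f c < f b ∧ f b < f d)

/-- `G` admits a `k`-queue layout: a linear ordering of the vertices (given by an injection
into `ℕ`) and an assignment of the edges to `k` queues so that no two edges in a common queue
are nested. -/
def HasQueueLayout (G : SimpleGraph V) (k : ℕ) : Prop :=
  ∃ f : V → ℕ, Function.Injective f ∧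
    ∃ σ : Sym2 V → Fin k,
      ∀ a b c d : V, G.Adj a b → G.Adj c d → σ s(a, b) = σ s(c, d) →
        ¬(f a < f c ∧ f c < f d ∧ f d < f b)

end More

section Minors

variable {V V' W α β : Type*}

theorem connected_induce_image {G : SimpleGraph V} {G' : SimpleGraph V'} (f : G →g G') {s : Set V}
    (hs : (G.induce s).Connected) : (G'.induce (f '' s)).Connected :=
  hs.map (induceHom f (Set.mapsTo_image f s)) (Set.surjective_mapsTo_image_restrict f s)

theorem connected_induce_biUnion {M : SimpleGraph W} {G : SimpleGraph V} {D : W → Set V}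
    {s : Set W} (hs : (M.induce s).Connected) (hD : ∀ w, (G.induce (D w)).Connected)
    (hadj : ∀ w w', M.Adj w w' → ∃ x ∈ D w, ∃ y ∈ D w', G.Adj x y) :
    (G.induce (⋃ w ∈ s, D w)).Connected := by
  have hsub : ∀ w : s, D w ⊆ ⋃ w ∈ s, D w := fun w => Set.subset_biUnion_of_mem w.2
  have reachable_of_mem : ∀ (w : s) {p q : V} (hp : p ∈ D w) (hq : q ∈ D w),
      (G.induce (⋃ w ∈ s, D w)).Reachable ⟨p, hsub w hp⟩ ⟨q, hsub w hq⟩ := fun w p q hp hq =>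
    ((hD w).preconnected ⟨p, hp⟩ ⟨q, hq⟩).map (induceHomOfLE G (hsub w)).toHom
  have reachable_of_walk : ∀ {u v : s}, (M.induce s).Walk u v → ∀ {p q : V} (hp : p ∈ D u)
      (hq : q ∈ D v), (G.induce (⋃ w ∈ s, D w)).Reachable ⟨p, hsub u hp⟩ ⟨q, hsub v hq⟩ := by
    intro u v walk
    induction walk with
    | nil => exact reachable_of_mem _
    | cons h _ ih =>
      intro p q hp hq
      obtain ⟨x, hx, y, hy, hxy⟩ := hadj _ _ h
      have hstep : (G.induce (⋃ w ∈ s, D w)).Adj ⟨x, hsub _ hx⟩ ⟨y, hsub _ hy⟩ := hxy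
      exact ((reachable_of_mem _ hp hx).trans hstep.reachable).trans (ih hy hq)
  obtain ⟨u⟩ := hs.nonempty
  obtain ⟨p, hp⟩ := (hD u).nonempty
  refine (connected_iff_exists_forall_reachable _).2 ⟨⟨p, hsub u hp⟩, ?_⟩
  rintro ⟨q, hq⟩
  obtain ⟨v, hv, hqv⟩ := Set.mem_iUnion₂.1 hq
  obtain ⟨walk⟩ := hs.preconnected u ⟨v, hv⟩
  exact reachable_of_walk walk hp hqv

theorem IsMinor.trans {H : SimpleGraph α} {M : SimpleGraph W} {G : SimpleGraph V}
    (hHM : IsMinor H M) (hMG : IsMinor M G) : IsMinor H G := by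
  obtain ⟨B, hne, hconn, hdisj, hadj⟩ := hHM
  obtain ⟨D, hDne, hDconn, hDdisj, hDadj⟩ := hMG
  refine ⟨fun a => ⋃ w ∈ B a, D w, fun a => ?_,
    fun a => connected_induce_biUnion (hconn a) hDconn hDadj, fun a b hab => ?_, fun a b hab => ?_⟩
  · exact Set.nonempty_biUnion.2 ((hne a).imp fun w hw => ⟨hw, hDne w⟩)
  · simp only [Set.disjoint_iUnion_left, Set.disjoint_iUnion_right]
    exact fun w hw w' hw' => hDdisj ((hdisj hab).ne_of_mem hw' hw)
  · obtain ⟨w, hw, w', hw', hww'⟩ := hadj a b hab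
    obtain ⟨x, hx, y, hy, hxy⟩ := hDadj w w' hww'
    exact ⟨x, Set.mem_biUnion hw hx, y, Set.mem_biUnion hw' hy, hxy⟩

theorem ContainsSubgraph.isMinor {G : SimpleGraph V} {H : SimpleGraph α}
    (h : ContainsSubgraph G H) : IsMinor H G := by
  obtain ⟨f, hf⟩ := h
  exact ⟨fun a => {f a}, fun a => Set.singleton_nonempty _, fun a => .of_subsingleton,
    fun a b hab => Set.disjoint_singleton.2 (hf.ne hab),
    fun a b hab => ⟨f a, rfl, f b, rfl, f.map_rel hab⟩⟩

theorem IsMinor.top_option {G : SimpleGraph V} {v : V}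
    (h : IsMinor (⊤ : SimpleGraph α) (G.induce (G.neighborSet v))) :
    IsMinor (⊤ : SimpleGraph (Option α)) G := by
  obtain ⟨B, hne, hconn, hdisj, hadj⟩ := h
  have hadj_v : ∀ a, ∃ x ∈ B a, G.Adj v x := fun a => (hne a).imp fun x hx => ⟨hx, x.2⟩
  have hdisj_v : ∀ a, Disjoint {v} (Subtype.val '' B a) := by
    simp only [Set.disjoint_singleton_left, Set.mem_image, not_exists, not_and]
    exact fun a x _ hx => G.ne_of_adj x.2 hx.symm
  refine ⟨fun o => o.elim {v} fun a => Subtype.val '' B a, ?_, ?_, ?_, ?_⟩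
  · rintro (_ | a)
    exacts [Set.singleton_nonempty v, (hne a).image _]
  · rintro (_ | a)
    · exact Connected.of_subsingleton (G := G.induce {v})
    · exact connected_induce_image (Embedding.induce _).toHom (hconn a)
  · rintro (_ | a) (_ | b) hab
    · exact absurd rfl hab
    · exact hdisj_v b
    · exact (hdisj_v a).symm
    · exact (Set.disjoint_image_iff Subtype.val_injective).2 (hdisj (ne_of_apply_ne some hab))
  · rintro (_ | a) (_ | b) hab
    · exact absurd rfl hab
    · obtain ⟨x, hx, hvx⟩ := hadj_v b
      exact ⟨v, rfl, x, ⟨x, hx, rfl⟩, hvx⟩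
    · obtain ⟨x, hx, hvx⟩ := hadj_v a
      exact ⟨x, ⟨x, hx, rfl⟩, v, rfl, hvx.symm⟩
    · obtain ⟨x, hx, y, hy, hxy⟩ := hadj a b (ne_of_apply_ne some hab)
      exact ⟨x, ⟨x, hx, rfl⟩, y, ⟨y, hy, rfl⟩, hxy⟩

end Minors

section Contraction

variable {V : Type*}

/-- The contraction of the edge `xy`: the vertex `y` is removed, and `x`, which stands for the
vertex arising from the edge, takes over its neighbours. -/
def contractEdge (G : SimpleGraph V) (x y : V) : SimpleGraph {v // v ≠ y} :=
  SimpleGraph.fromRel fun u v => G.Adj u v ∨ u.1 = x ∧ G.Adj y v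

theorem isMinor_contractEdge {G : SimpleGraph V} {x y : V} (hxy : G.Adj x y) :
    IsMinor (contractEdge G x y) G := by
  classical
  let B : {v // v ≠ y} → Set V := fun v => if v.1 = x then {x, y} else {v.1}
  have self_mem : ∀ v, v.1 ∈ B v := by grind
  have mem_of_eq : ∀ v, v.1 = x → y ∈ B v := by grind
  refine ⟨B, fun v => ⟨v, self_mem v⟩, fun v => ?_, fun u v huv => ?_, fun u v huv => ?_⟩
  · by_cases hv : v.1 = x
    · rw [show B v = {x, y} from if_pos hv]
      exact induce_pair_connected_of_adj hxy
    · rw [show B v = {v.1} from if_neg hv]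
      exact Connected.of_subsingleton (G := G.induce {v.1})
  · have huv' : u.1 ≠ v.1 := Subtype.coe_ne_coe.2 huv
    exact Set.disjoint_left.2 (by grind)
  · obtain ⟨-, (h | ⟨hu, h⟩) | (h | ⟨hv, h⟩)⟩ := (fromRel_adj _ _ _).1 huv
    · exact ⟨u, self_mem u, v, self_mem v, h⟩
    · exact ⟨y, mem_of_eq u hu, v, self_mem v, h⟩
    · exact ⟨u, self_mem u, v, self_mem v, h.symm⟩
    · exact ⟨u, self_mem u, y, mem_of_eq v hv, h.symm⟩

theorem card_subtype_ne_add_one [Finite V] (y : V) : Nat.card {v // v ≠ y} + 1 = Nat.card V := by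
  classical
  rw [← Finite.card_option, Nat.card_congr (Equiv.optionSubtypeNe y)]

theorem ncard_edgeSet_le_contractEdge [Finite V] {G : SimpleGraph V} {x y : V} (hxy : G.Adj x y) :
    G.edgeSet.ncard ≤
      (contractEdge G x y).edgeSet.ncard + (G.commonNeighbors x y).ncard + 1 := by
  classical
  -- The edges at `y` collapse onto edges at `x` only over a common neighbour of `x` and `y`, so
  -- away from `lost` the contraction is injective on edges.
  set lost : Set (Sym2 V) := insert s(x, y) ((fun z => s(y, z)) '' G.commonNeighbors x y)
  have hlost : lost.ncard ≤ (G.commonNeighbors x y).ncard + 1 :=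
    (Set.ncard_insert_le _ _).trans (Nat.add_le_add_right (Set.ncard_image_le (Set.toFinite _)) 1)
  have mem_lost : ∀ a b, s(a, b) ∈ lost ↔ s(a, b) = s(x, y) ∨
      ∃ z, (G.Adj x z ∧ G.Adj y z) ∧ s(y, z) = s(a, b) := fun _ _ => Iff.rfl
  let π : V → {v // v ≠ y} := fun v => if hv : v = y then ⟨x, hxy.ne⟩ else ⟨v, hv⟩
  have hπ : ∀ v, (π v).1 = if v = y then x else v := by intro v; simp only [π]; split_ifs <;> rfl
  have hmaps : ∀ e ∈ G.edgeSet \ lost, Sym2.map π e ∈ (contractEdge G x y).edgeSet := by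
    rintro ⟨a, b⟩ ⟨hab, hlost⟩
    have hab : G.Adj a b := hab
    simp only [mem_lost, not_or, not_exists, not_and] at hlost
    change (contractEdge G x y).Adj (π a) (π b)
    simp only [contractEdge, fromRel_adj, hπ, ne_eq, Subtype.ext_iff]
    grind [G.adj_comm, hab.ne, hxy.ne]
  have hinj : Set.InjOn (Sym2.map π) (G.edgeSet \ lost) := by
    rintro ⟨a, b⟩ ⟨hab, habl⟩ ⟨c, d⟩ ⟨hcd, hcdl⟩ heq
    have hab : G.Adj a b := hab
    have hcd : G.Adj c d := hcd
    simp only [mem_lost, not_or, not_exists, not_and] at habl hcdl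
    simp only [Sym2.map_mk, Sym2.eq_iff, Subtype.ext_iff, hπ] at heq ⊢
    grind [G.adj_comm, hxy.ne]
  have hkept : (G.edgeSet \ lost).ncard ≤ (contractEdge G x y).edgeSet.ncard :=
    Set.ncard_le_ncard_of_injOn _ hmaps hinj
  have := Set.le_ncard_sdiff lost G.edgeSet
  omega

end Contraction

section EdgeCount

variable {V : Type*}

theorem mul_ncard_le_two_mul_ncard_edgeSet [Finite V] {G : SimpleGraph V} {s : Set V} {m : ℕ}
    (hs : ∀ v ∈ s, m ≤ (G.neighborSet v).ncard) : m * s.ncard ≤ 2 * G.edgeSet.ncard := by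
  classical
  have := Fintype.ofFinite V
  calc m * s.ncard = ∑ _ ∈ s.toFinset, m := by
        rw [Finset.sum_const, smul_eq_mul, mul_comm, Set.ncard_eq_toFinset_card']
    _ ≤ ∑ v ∈ s.toFinset, G.degree v := Finset.sum_le_sum fun v hv => by
        rw [← card_neighborFinset_eq_degree, ← Set.ncard_coe_finset, coe_neighborFinset]
        exact hs v (Set.mem_toFinset.1 hv)
    _ ≤ ∑ v, G.degree v := Finset.sum_le_sum_of_subset (Finset.subset_univ _)
    _ = 2 * G.edgeSet.ncard := by
        rw [sum_degrees_eq_twice_card_edges, ← coe_edgeFinset, Set.ncard_coe_finset]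

theorem ncard_neighborSet_induce (G : SimpleGraph V) (s : Set V) (v : s) :
    ((G.induce s).neighborSet v).ncard = (G.neighborSet v ∩ s).ncard := by
  rw [← Set.ncard_image_of_injective _ Subtype.val_injective, Set.inter_comm,
    ← Subtype.image_preimage_coe]
  rfl

end EdgeCount

section Mader

theorem exists_isMinor_forall_lt_ncard_commonNeighbors (c : ℕ) {V : Type v} [Finite V] [Nonempty V]
    {G : SimpleGraph V} (hG : (c + 1) * Nat.card V ≤ G.edgeSet.ncard) :
    ∃ (W : Type v) (_ : Finite W) (M : SimpleGraph W), IsMinor M G ∧ M ≠ ⊥ ∧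
      ∀ x y, M.Adj x y → c < (M.commonNeighbors x y).ncard := by
  induction hn : Nat.card V generalizing V with
  | zero => exact absurd hn Nat.card_pos.ne'
  | succ n ih =>
    by_cases! h : ∀ x y, G.Adj x y → c < (G.commonNeighbors x y).ncard
    · refine ⟨V, ‹_›, G, ContainsSubgraph.isMinor ⟨.id, Function.injective_id⟩, ?_, h⟩
      rintro rfl
      simp [hn] at hG
    · obtain ⟨x, y, hxy, hc⟩ := h
      have : Nonempty {v // v ≠ y} := ⟨x, hxy.ne⟩
      have hcard : Nat.card {v // v ≠ y} = n := by
        have := card_subtype_ne_add_one y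
        omega
      have hedges : (c + 1) * Nat.card {v // v ≠ y} ≤ (contractEdge G x y).edgeSet.ncard := by
        have := ncard_edgeSet_le_contractEdge hxy
        rw [hn, mul_add] at hG
        rw [hcard]
        omega
      obtain ⟨W, hW, M, hM, hM'⟩ := ih hedges hcard
      exact ⟨W, hW, M, hM.trans (isMinor_contractEdge hxy), hM'⟩

theorem exists_isMinor_top_of_mul_card_le_ncard_edgeSet (α : Type u) [Finite α] :
    ∃ c : ℕ, ∀ (V : Type v) [Finite V] [Nonempty V] (G : SimpleGraph V),
      c * Nat.card V ≤ G.edgeSet.ncard → IsMinor (⊤ : SimpleGraph α) G := by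
  induction α using Finite.induction_empty_option with
  | of_equiv e ih =>
    obtain ⟨c, hc⟩ := ih
    refine ⟨c, fun V _ _ G hG => .trans (ContainsSubgraph.isMinor ?_) (hc V G hG)⟩
    exact ⟨(Embedding.completeGraph e.symm.toEmbedding).toHom, e.symm.injective⟩
  | h_empty => exact ⟨0, fun V _ _ G _ => ⟨fun _ => ∅, nofun, nofun, nofun, nofun⟩⟩
  | @h_option α _ ih =>
    -- After contracting edges with few common neighbours, the neighbourhood of any vertex is dense
    -- and contains the smaller complete minor.
    obtain ⟨c, hc⟩ := ih
    refine ⟨2 * c + 1, fun V _ _ G hG => ?_⟩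
    obtain ⟨W, _, M, hMG, hM, hcommon⟩ :=
      exists_isMinor_forall_lt_ncard_commonNeighbors (2 * c) hG
    obtain ⟨v, w, hvw⟩ := ne_bot_iff_exists_adj.1 hM
    have : Nonempty (M.neighborSet v) := ⟨w, hvw⟩
    have hdeg : ∀ u ∈ Set.univ, 2 * c ≤ ((M.induce (M.neighborSet v)).neighborSet u).ncard := by
      intro u _
      rw [ncard_neighborSet_induce, Set.inter_comm]
      exact (hcommon v u u.2).le
    have hdense := mul_ncard_le_two_mul_ncard_edgeSet hdeg
    rw [Set.ncard_univ, mul_assoc] at hdense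
    exact (hc _ _ (Nat.le_of_mul_le_mul_left hdense two_pos)).top_option.trans hMG

theorem exists_ncard_edgeSet_lt_of_not_isMinor {α : Type u} [Finite α] (H : SimpleGraph α) :
    ∃ c : ℕ, ∀ (V : Type v) [Finite V] [Nonempty V] (G : SimpleGraph V),
      ¬ IsMinor H G → G.edgeSet.ncard < c * Nat.card V := by
  obtain ⟨c, hc⟩ := exists_isMinor_top_of_mul_card_le_ncard_edgeSet α
  have hH : IsMinor H (⊤ : SimpleGraph α) :=
    ContainsSubgraph.isMinor ⟨.ofLE le_top, Function.injective_id⟩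
  exact ⟨c, fun V _ _ G hG => lt_of_not_ge fun h => hG (hH.trans (hc V G h))⟩

end Mader

section Degeneracy

variable {V : Type*}

/-- `G` is `d`-degenerate: every nonempty set `S` of vertices contains a vertex with at most `d`
neighbours in `S`. -/
def IsDegenerate (G : SimpleGraph V) (d : ℕ) : Prop :=
  ∀ S : Set V, S.Nonempty → ∃ v ∈ S, (G.neighborSet v ∩ S).ncard ≤ d

theorem IsDegenerate.ncard_nonempty_cliques_le [Finite V] {G : SimpleGraph V} {d : ℕ}
    (hG : IsDegenerate G d) (S : Set V) :
    {Q : Set V | Q ⊆ S ∧ Q.Nonempty ∧ G.IsClique Q}.ncard ≤ 2 ^ d * S.ncard := by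
  induction hn : S.ncard generalizing S with
  | zero =>
    rw [Set.ncard_eq_zero] at hn
    subst hn
    refine ((Set.ncard_eq_zero).2 (Set.eq_empty_of_forall_notMem ?_)).le
    exact fun Q hQ => hQ.2.1.ne_empty (Set.subset_empty_iff.1 hQ.1)
  | succ n ih =>
    obtain ⟨v, hv, hdeg⟩ := hG S (Set.nonempty_of_ncard_ne_zero (by omega))
    have hsub : {Q : Set V | Q ⊆ S ∧ Q.Nonempty ∧ G.IsClique Q} ⊆
        {Q : Set V | Q ⊆ S \ {v} ∧ Q.Nonempty ∧ G.IsClique Q} ∪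
          insert v '' 𝒫 (G.neighborSet v ∩ S) := by
      rintro Q ⟨hQS, hne, hQ⟩
      by_cases hvQ : v ∈ Q
      · refine .inr ⟨Q \ {v}, fun w hw => ?_, Set.insert_sdiff_self_of_mem hvQ⟩
        exact ⟨hQ hvQ hw.1 (Ne.symm hw.2), hQS hw.1⟩
      · exact .inl ⟨Set.subset_sdiff_singleton hQS hvQ, hne, hQ⟩
    have hcard : (S \ {v}).ncard = n := by rw [Set.ncard_sdiff_singleton_of_mem hv, hn]; rfl
    calc {Q : Set V | Q ⊆ S ∧ Q.Nonempty ∧ G.IsClique Q}.ncard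
      _ ≤ {Q : Set V | Q ⊆ S \ {v} ∧ Q.Nonempty ∧ G.IsClique Q}.ncard +
            (insert v '' 𝒫 (G.neighborSet v ∩ S)).ncard :=
        (Set.ncard_le_ncard hsub).trans (Set.ncard_union_le _ _)
      _ ≤ 2 ^ d * n + 2 ^ d := by
        gcongr
        · exact ih _ hcard
        · refine (Set.ncard_image_le (Set.toFinite _)).trans ?_
          rw [Set.ncard_powerset]
          gcongr
          exact one_le_two
      _ = 2 ^ d * (n + 1) := rfl

theorem exists_isDegenerate_of_not_isMinor {α : Type u} [Finite α] (H : SimpleGraph α) :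
    ∃ d : ℕ, ∀ (V : Type v) [Finite V] (G : SimpleGraph V), ¬ IsMinor H G → IsDegenerate G d := by
  obtain ⟨c, hc⟩ := exists_ncard_edgeSet_lt_of_not_isMinor H
  refine ⟨2 * c, fun V _ G hG S hS => ?_⟩
  by_contra! hdeg
  have := hS.to_subtype
  have hdense : (2 * c) * (Set.univ : Set S).ncard ≤ 2 * (G.induce S).edgeSet.ncard :=
    mul_ncard_le_two_mul_ncard_edgeSet fun v _ => by
      rw [ncard_neighborSet_induce]
      exact (hdeg v v.2).le
  have hsparse := hc S (G.induce S) fun h =>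
    hG (h.trans (ContainsSubgraph.isMinor ⟨(Embedding.induce S).toHom, Subtype.val_injective⟩))
  rw [Set.ncard_univ, mul_assoc] at hdense
  omega

end Degeneracy

section AttachVertices

variable {ι B α : Type*}

/-- The graph obtained from `F` by attaching, for each `i : ι`, a new vertex with set of
neighbours `N i`. -/
def attachVertices (F : SimpleGraph B) (N : ι → Set B) : SimpleGraph (ι ⊕ B) :=
  SimpleGraph.fromRel fun
    | .inl i, .inr b => b ∈ N i
    | .inr b, .inr b' => F.Adj b b'
    | _, _ => False

variable {F : SimpleGraph B} {N : ι → Set B}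

@[simp]
theorem attachVertices_adj_inl_inl {i j : ι} :
    ¬ (attachVertices F N).Adj (.inl i) (.inl j) := by
  simp [attachVertices]

@[simp]
theorem attachVertices_adj_inl_inr {i : ι} {b : B} :
    (attachVertices F N).Adj (.inl i) (.inr b) ↔ b ∈ N i := by
  simp [attachVertices]

@[simp]
theorem attachVertices_adj_inr_inl {i : ι} {b : B} :
    (attachVertices F N).Adj (.inr b) (.inl i) ↔ b ∈ N i := by
  simp [attachVertices]

@[simp]
theorem attachVertices_adj_inr_inr {b b' : B} :
    (attachVertices F N).Adj (.inr b) (.inr b') ↔ F.Adj b b' := by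
  simp only [attachVertices, fromRel_adj, ne_eq, Sum.inr.injEq, F.adj_comm b', or_self,
    and_iff_right_iff_imp]
  exact Adj.ne

theorem containsSubgraph_attachVertices_of_isVertexCover {H : SimpleGraph α} {T : Set α}
    (hT : H.IsVertexCover T) {R : Set B} (hR : F.IsClique R) (e : T ↪ R) (f : ↥Tᶜ ↪ ι)
    (hf : ∀ a, R ⊆ N (f a)) : ContainsSubgraph (attachVertices F N) H := by
  classical
  refine ⟨⟨fun a => if ha : a ∈ T then .inr (e ⟨a, ha⟩).1 else .inl (f ⟨a, ha⟩), ?_⟩, ?_⟩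
  · intro a b hab
    split_ifs with ha hb hb
    · refine attachVertices_adj_inr_inr.2 (hR (e _).2 (e _).2 ?_)
      exact Subtype.coe_ne_coe.2 (e.injective.ne (Subtype.coe_ne_coe.1 hab.ne))
    · exact attachVertices_adj_inr_inl.2 (hf _ (e _).2)
    · exact attachVertices_adj_inl_inr.2 (hf _ (e _).2)
    · exact ((hT hab).elim ha hb).elim
  · intro a b hab
    simp only [RelHom.coeFn_mk] at hab
    split_ifs at hab
    · exact congrArg Subtype.val (e.injective (Subtype.ext (Sum.inr_injective hab)))
    · exact congrArg Subtype.val (f.injective (Sum.inl_injective hab))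

-- Contract the edge from `u` to the attached vertex `i`: this makes `u` adjacent to `v`.
theorem isMinor_attachVertices_sup_edge {i : ι} {u v : B} (hu : u ∈ N i) (hv : v ∈ N i) :
    IsMinor (attachVertices (F ⊔ edge u v) fun j : {j // j ≠ i} => N j) (attachVertices F N) := by
  let f : {j // j ≠ i} ⊕ B → {x : ι ⊕ B // x ≠ .inl i} :=
    Sum.elim (fun j => ⟨.inl j, Sum.inl_injective.ne j.2⟩) fun b => ⟨.inr b, Sum.inr_ne_inl⟩
  have hf : Function.Injective f := by
    rintro (j | b) (j' | b') h <;> simp_all [f, Subtype.ext_iff]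
  refine .trans (ContainsSubgraph.isMinor ⟨⟨f, ?_⟩, hf⟩)
    (isMinor_contractEdge (attachVertices_adj_inr_inl.2 hu))
  intro x y hxy
  refine (fromRel_adj _ _ _).2 ⟨hf.ne hxy.ne, ?_⟩
  rcases x with j | b <;> rcases y with j' | b'
  · exact absurd hxy attachVertices_adj_inl_inl
  · exact .inl (.inl (attachVertices_adj_inl_inr.2 (by simpa using hxy)))
  · exact .inl (.inl (attachVertices_adj_inr_inl.2 (by simpa using hxy)))
  · rcases attachVertices_adj_inr_inr.1 hxy with h | h
    · exact .inl (.inl (attachVertices_adj_inr_inr.2 h))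
    · obtain ⟨⟨rfl, rfl⟩ | ⟨rfl, rfl⟩, -⟩ := (edge_adj _ _ _ _).1 h
      · exact .inl (.inr ⟨rfl, attachVertices_adj_inl_inr.2 hv⟩)
      · exact .inr (.inr ⟨rfl, attachVertices_adj_inl_inr.2 hv⟩)

theorem containsSubgraph_attachVertices_induce {V : Type*} (G : SimpleGraph V) {A B : Set V}
    (hAB : Disjoint A B) : ContainsSubgraph G
      (attachVertices (G.induce B) fun a : A => Subtype.val ⁻¹' G.neighborSet a) := by
  refine ⟨⟨Sum.elim Subtype.val Subtype.val, ?_⟩, ?_⟩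
  · rintro (a | b) (a' | b') h
    · exact absurd h attachVertices_adj_inl_inl
    · simpa using h
    · simpa [G.adj_comm] using h
    · simpa using h
  · exact Subtype.val_injective.sumElim Subtype.val_injective
      fun a b => hAB.ne_of_mem a.2 b.2

theorem ncard_le_card_of_forall_subset_of_not_isMinor [Finite α] [Finite ι] [Finite B]
    {H : SimpleGraph α} {T : Set α} (hT : H.IsVertexCover T) {R : Set B} (hR : F.IsClique R)
    (hTR : T.ncard = R.ncard) {s : Set ι} (hs : ∀ i ∈ s, R ⊆ N i)
    (hmin : ¬ IsMinor H (attachVertices F N)) : s.ncard ≤ Nat.card α := by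
  have := Fintype.ofFinite α
  have := Fintype.ofFinite s
  by_contra! hlt
  rw [← Nat.card_coe_set_eq, Nat.card_eq_fintype_card, Nat.card_eq_fintype_card] at hlt
  obtain ⟨f⟩ := Function.Embedding.nonempty_of_card_le hlt.le
  obtain ⟨e⟩ : Nonempty (T ≃ R) := Finite.card_eq.1 hTR
  exact hmin (containsSubgraph_attachVertices_of_isVertexCover hT hR e.toEmbedding
    (((Function.Embedding.subtype _).trans f).trans (Function.Embedding.subtype _))
    fun a => hs _ (f a).2).isMinor

theorem card_le_of_forall_isClique_of_not_isMinor [Finite α] [Finite ι] [Finite B] {d : ℕ}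
    {H : SimpleGraph α} {T : Set α} (hT : H.IsVertexCover T) (hTne : T.Nonempty)
    (hF : IsDegenerate F d) (hcard : ∀ i, T.ncard ≤ (N i).ncard) (hN : ∀ i, F.IsClique (N i))
    (hmin : ¬ IsMinor H (attachVertices F N)) :
    Nat.card ι ≤ Nat.card α * (2 ^ d * Nat.card B) := by
  classical
  have := Fintype.ofFinite ι
  choose Q hQN hQcard using fun i => Set.exists_subset_card_eq (hcard i)
  have hQclique : ∀ i, F.IsClique (Q i) := fun i => (hN i).subset (hQN i)
  have hQne : ∀ i, (Q i).Nonempty := fun i =>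
    Set.nonempty_of_ncard_ne_zero ((hQcard i).trans_ne hTne.ncard_pos.ne')
  set cliques : Set (Set B) := {R | R ⊆ Set.univ ∧ R.Nonempty ∧ F.IsClique R}
  have hfiber : ∀ R ∈ Finset.univ.image Q, (Finset.univ.filter (Q · = R)).card ≤ Nat.card α := by
    simp only [Finset.forall_mem_image, Finset.mem_univ, forall_const]
    intro i
    rw [← Set.ncard_coe_finset]
    refine ncard_le_card_of_forall_subset_of_not_isMinor hT (hQclique i) (hQcard i).symm ?_ hmin
    intro j hj
    rw [← (Finset.mem_filter.1 hj).2]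
    exact hQN j
  have himage : (Finset.univ.image Q).card ≤ 2 ^ d * Nat.card B := by
    rw [← Set.ncard_coe_finset, ← Set.ncard_univ B]
    refine (Set.ncard_le_ncard ?_).trans (hF.ncard_nonempty_cliques_le Set.univ)
    simp only [Finset.coe_image, Set.image_subset_iff]
    exact fun i _ => ⟨Set.subset_univ _, hQne i, hQclique i⟩
  calc Nat.card ι = (Finset.univ : Finset ι).card := Nat.card_eq_fintype_card
    _ ≤ Nat.card α * (Finset.univ.image Q).card := Finset.card_le_mul_card_image _ _ hfiber
    _ ≤ _ := Nat.mul_le_mul_left _ himage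

theorem exists_card_add_ncard_edgeSet_le_of_not_isMinor {α : Type u} [Finite α]
    {H : SimpleGraph α} {T : Set α} (hT : H.IsVertexCover T) (hTne : T.Nonempty) :
    ∃ K : ℕ, ∀ (ι B : Type v) [Finite ι] [Finite B] [Nonempty B] (F : SimpleGraph B)
      (N : ι → Set B), (∀ i, T.ncard ≤ (N i).ncard) → ¬ IsMinor H (attachVertices F N) →
      Nat.card ι + F.edgeSet.ncard ≤ K * Nat.card B := by
  obtain ⟨c, hc⟩ := exists_ncard_edgeSet_lt_of_not_isMinor H
  obtain ⟨d, hd⟩ := exists_isDegenerate_of_not_isMinor H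
  refine ⟨Nat.card α * 2 ^ d + c, fun ι B _ _ _ F N hcard hmin => ?_⟩
  -- Trading an attached vertex for a new edge of `F` leaves `Nat.card ι + F.edgeSet.ncard`
  -- unchanged; when no trade is possible, all `N i` are cliques.
  induction hn : Nat.card ι using Nat.strong_induction_on generalizing ι F with | _ n ih
  by_cases! hclique : ∀ i, F.IsClique (N i)
  · have hF : ¬ IsMinor H F := fun h => hmin (h.trans (ContainsSubgraph.isMinor
      ⟨⟨Sum.inr, attachVertices_adj_inr_inr.2⟩, Sum.inr_injective⟩))
    have hι := card_le_of_forall_isClique_of_not_isMinor hT hTne (hd B F hF) hcard hclique hmin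
    rw [add_mul, mul_assoc]
    have := (hc B F hF).le
    omega
  · obtain ⟨i, hi⟩ := hclique
    obtain ⟨u, hu, v, hv, huv, hadj⟩ : ∃ u ∈ N i, ∃ v ∈ N i, u ≠ v ∧ ¬ F.Adj u v := by
      simpa [IsClique, Set.Pairwise] using hi
    have hedges : (F ⊔ edge u v).edgeSet.ncard = F.edgeSet.ncard + 1 := by
      rw [edgeSet_sup, edgeSet_edge_of_ne huv, Set.union_singleton,
        Set.ncard_insert_of_notMem (show s(u, v) ∉ F.edgeSet from hadj)]
    have hcardι := card_subtype_ne_add_one i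
    have hmin' : ¬ IsMinor H (attachVertices (F ⊔ edge u v) fun j : {j // j ≠ i} => N j) :=
      fun h => hmin (h.trans (isMinor_attachVertices_sup_edge hu hv))
    have := ih (n - 1) (by omega) {j // j ≠ i} inferInstance _ _ (fun j => hcard j) hmin' (by omega)
    omega

theorem exists_ncard_le_mul_ncard_of_not_isMinor {α : Type u} [Finite α]
    {H : SimpleGraph α} {T : Set α} (hT : H.IsVertexCover T) (hTne : T.Nonempty) :
    ∃ K : ℕ, ∀ (V : Type v) [Finite V] (G : SimpleGraph V) (A B : Set V), Disjoint A B →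
      B.Nonempty → (∀ a ∈ A, T.ncard ≤ (G.neighborSet a ∩ B).ncard) → ¬ IsMinor H G →
      A.ncard ≤ K * B.ncard := by
  obtain ⟨K, hK⟩ := exists_card_add_ncard_edgeSet_le_of_not_isMinor hT hTne
  refine ⟨K, fun V _ G A B hAB hB hdeg hG => ?_⟩
  have := hB.to_subtype
  refine (Nat.le_add_right _ _).trans (hK A B (G.induce B)
    (fun a => Subtype.val ⁻¹' G.neighborSet a) (fun a => ?_) fun h =>
      hG (h.trans (containsSubgraph_attachVertices_induce G hAB).isMinor))
  rw [← Set.ncard_image_of_injective _ Subtype.val_injective, Subtype.image_preimage_coe,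
    Set.inter_comm]
  exact hdeg a a.2

end AttachVertices

section LightEdge

variable {V : Type*}

/-- `G` has an `l`-light edge: an edge whose two ends have degree at most `l`. -/
def HasLightEdge (G : SimpleGraph V) (l : ℕ) : Prop :=
  ∃ x y, G.Adj x y ∧ (G.neighborSet x).ncard ≤ l ∧ (G.neighborSet y).ncard ≤ l

theorem exists_hasLightEdge_of_not_isMinor {α : Type u} [Finite α] {H : SimpleGraph α} {T : Set α}
    (hT : H.IsVertexCover T) (hTne : T.Nonempty) :
    ∃ l : ℕ, ∀ (V : Type v) [Finite V] [Nonempty V] (G : SimpleGraph V), ¬ IsMinor H G →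
      (∀ v, T.ncard ≤ (G.neighborSet v).ncard) → HasLightEdge G l := by
  obtain ⟨c, hc⟩ := exists_ncard_edgeSet_lt_of_not_isMinor H
  obtain ⟨K, hK⟩ := exists_ncard_le_mul_ncard_of_not_isMinor hT hTne
  refine ⟨2 * c * (K + 1), fun V _ _ G hG hdeg => ?_⟩
  set l := 2 * c * (K + 1)
  by_contra hlight
  set A : Set V := {v | (G.neighborSet v).ncard ≤ l}
  have hA : ∀ a ∈ A, G.neighborSet a ⊆ Aᶜ := fun a ha b hab hb => hlight ⟨a, b, hab, ha, hb⟩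
  have hne : (Aᶜ).Nonempty := by
    obtain ⟨v⟩ := ‹Nonempty V›
    by_cases hv : v ∈ A
    · have hpos : 0 < (G.neighborSet v).ncard := hTne.ncard_pos.trans_le (hdeg v)
      exact (Set.nonempty_of_ncard_ne_zero hpos.ne').mono (hA v hv)
    · exact ⟨v, hv⟩
  have hcardA : A.ncard ≤ K * (Aᶜ).ncard := by
    refine hK V G A Aᶜ disjoint_compl_right hne (fun a ha => ?_) hG
    rw [Set.inter_eq_left.2 (hA a ha)]
    exact hdeg a
  have hheavy : (l + 1) * (Aᶜ).ncard ≤ 2 * G.edgeSet.ncard :=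
    mul_ncard_le_two_mul_ncard_edgeSet fun v (hv : ¬ _ ≤ l) => not_le.1 hv
  refine absurd hheavy (not_le.2 ?_)
  calc 2 * G.edgeSet.ncard ≤ 2 * (c * (A.ncard + (Aᶜ).ncard)) := by
        rw [Set.ncard_add_ncard_compl]
        exact Nat.mul_le_mul_left _ (hc V G hG).le
    _ ≤ 2 * (c * (K * (Aᶜ).ncard + (Aᶜ).ncard)) := by gcongr
    _ = l * (Aᶜ).ncard := by ring
    _ < (l + 1) * (Aᶜ).ncard := Nat.mul_lt_mul_of_pos_right l.lt_succ_self hne.ncard_pos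

end LightEdge

section Colouring

variable {V : Type*} {G : SimpleGraph V} {G' : G.Subgraph} {L : V → Finset ℕ} {c : V → ℕ} {l : ℕ}

/-- `c` colours the vertices of the subgraph `G'` from the lists `L` so that every vertex has at
most `l` neighbours of its own colour. Outside `G'` the values of `c` are arbitrary. -/
def IsDefectiveListColoring (G' : G.Subgraph) (L : V → Finset ℕ) (l : ℕ) (c : V → ℕ) : Prop :=
  (∀ v ∈ G'.verts, c v ∈ L v) ∧ ∀ v, {w | G'.Adj v w ∧ c w = c v}.ncard ≤ l

theorem IsDefectiveListColoring.exists_of_deleteVerts [Finite V] {v : V}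
    (hc : IsDefectiveListColoring (G'.deleteVerts {v}) L l c)
    (hv : (G'.neighborSet v).ncard < (L v).card) : ∃ c', IsDefectiveListColoring G' L l c' := by
  classical
  obtain ⟨x, hxL, hx⟩ : ∃ x ∈ (L v : Set ℕ), x ∉ c '' G'.neighborSet v := by
    refine Set.exists_mem_notMem_of_ncard_lt_ncard ?_
    rw [Set.ncard_coe_finset]
    exact (Set.ncard_image_le (Set.toFinite _)).trans_lt hv
  have hfree : ∀ w, G'.Adj v w → c w ≠ x := fun w hvw hw => hx ⟨w, hvw, hw⟩
  refine ⟨Function.update c v x, fun u hu => ?_, fun u => ?_⟩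
  · rcases eq_or_ne u v with rfl | huv
    · simpa using hxL
    · rw [Function.update_of_ne huv]
      exact hc.1 u ⟨hu, huv⟩
  · rcases eq_or_ne u v with rfl | huv
    · suffices h : {w | G'.Adj u w ∧ Function.update c u x w = Function.update c u x u} = ∅ by
        rw [h, Set.ncard_empty]
        exact l.zero_le
      refine Set.eq_empty_of_forall_notMem fun w ⟨huw, hw⟩ => hfree w huw ?_
      rwa [Function.update_self, Function.update_of_ne (G'.adj_sub huw).ne'] at hw
    · refine (Set.ncard_le_ncard fun w hw => ?_).trans (hc.2 u)
      have hwv : w ≠ v := by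
        rintro rfl
        refine hfree u hw.1.symm ?_
        simpa [huv] using hw.2.symm
      refine ⟨Subgraph.deleteVerts_adj.2
        ⟨G'.edge_vert hw.1, huv, G'.edge_vert hw.1.symm, hwv, hw.1⟩, ?_⟩
      simpa [huv, hwv] using hw.2

theorem IsDefectiveListColoring.of_deleteEdges [Finite V] {x y : V}
    (hc : IsDefectiveListColoring (G'.deleteEdges {s(x, y)}) L l c)
    (hx : (G'.neighborSet x).ncard ≤ l) (hy : (G'.neighborSet y).ncard ≤ l) :
    IsDefectiveListColoring G' L l c := by
  refine ⟨hc.1, fun v => ?_⟩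
  by_cases hv : v = x ∨ v = y
  · have hdeg : (G'.neighborSet v).ncard ≤ l := by rcases hv with rfl | rfl <;> assumption
    exact (Set.ncard_le_ncard fun w hw => hw.1).trans hdeg
  · refine (Set.ncard_le_ncard fun w hw => ?_).trans (hc.2 v)
    have hvw : s(v, w) ∉ ({s(x, y)} : Set (Sym2 V)) := by grind
    exact ⟨⟨hw.1, hvw⟩, hw.2⟩

theorem choosable_of_forall_subgraph [Finite V] {k : ℕ}
    (h : ∀ G' : G.Subgraph, G'.verts.Nonempty →
      (∃ v, (G'.coe.neighborSet v).ncard < k) ∨ HasLightEdge G'.coe l) : Choosable G k l := by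
  intro L hL
  have ncard_coe : ∀ (G' : G.Subgraph) (v : G'.verts),
      (G'.coe.neighborSet v).ncard = (G'.neighborSet v).ncard := fun G' v =>
    Nat.card_congr (Subgraph.coeNeighborSetEquiv v)
  have key : ∀ G' : G.Subgraph, ∃ c, IsDefectiveListColoring G' L l c := by
    intro G'
    induction G' using WellFoundedLT.induction with | _ G' ih
    rcases G'.verts.eq_empty_or_nonempty with hempty | hne
    · have hadj : ∀ v w, ¬ G'.Adj v w := fun v w hvw => by simpa [hempty] using G'.edge_vert hvw
      exact ⟨fun _ => 0, by simp [IsDefectiveListColoring, hempty, hadj]⟩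
    · rcases h G' hne with ⟨v, hv⟩ | ⟨x, y, hxy, hx, hy⟩
      · rw [ncard_coe, ← hL v] at hv
        have hlt : G'.deleteVerts {v.1} < G' :=
          lt_of_le_not_ge Subgraph.deleteVerts_le fun hle => (hle.1 v.2).2 rfl
        obtain ⟨c, hc⟩ := ih _ hlt
        exact hc.exists_of_deleteVerts hv
      · rw [ncard_coe] at hx hy
        have hlt : G'.deleteEdges {s(x.1, y.1)} < G' :=
          lt_of_le_not_ge (Subgraph.deleteEdges_le _) fun hle => (hle.2 hxy).2 rfl
        obtain ⟨c, hc⟩ := ih _ hlt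
        exact ⟨c, hc.of_deleteEdges hx hy⟩
  obtain ⟨c, hcL, hc⟩ := key ⊤
  exact ⟨c, fun v => hcL v trivial, fun v => by simpa using hc v⟩

theorem Choosable.defColorable {k d : ℕ} (h : Choosable G k d) : DefColorable G k d := by
  obtain ⟨c, hc, hdefect⟩ := h (fun _ => Finset.range k) fun _ => Finset.card_range k
  refine ⟨fun v => ⟨c v, Finset.mem_range.1 (hc v)⟩, fun v => ?_⟩
  simpa using hdefect v

end Colouring

theorem exists_isVertexCover_ncard_eq {α : Type*} (H : SimpleGraph α) :
    ∃ T, H.IsVertexCover T ∧ T.ncard = vertexCoverNumber H := by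
  obtain ⟨T, hcard, hT⟩ := Nat.sInf_mem (s := {k | ∃ S : Set α, S.ncard = k ∧ H.IsVertexCover S})
    ⟨_, Set.univ, rfl, isVertexCover_univ⟩
  exact ⟨T, hT, hcard⟩

theorem stmt14_general {α : Type u} [Finite α] (H : SimpleGraph α) (hH : H.edgeSet.Nonempty) :
    ∃ d : ℕ, ∀ (V : Type v) [Finite V] (G : SimpleGraph V),
      ¬ IsMinor H G → Choosable G (vertexCoverNumber H) d := by
  obtain ⟨T, hT, hcard⟩ := exists_isVertexCover_ncard_eq H
  have hTne : T.Nonempty := by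
    rw [Set.nonempty_iff_ne_empty]
    rintro rfl
    exact (edgeSet_nonempty.1 hH) (isVertexCover_empty.1 hT)
  obtain ⟨l, hl⟩ := exists_hasLightEdge_of_not_isMinor hT hTne
  refine ⟨l, fun V _ G hG => choosable_of_forall_subgraph fun G' hne => ?_⟩
  have := hne.to_subtype
  have hG' : ¬ IsMinor H G'.coe := fun h =>
    hG (h.trans (ContainsSubgraph.isMinor ⟨G'.hom, G'.hom_injective⟩))
  rw [or_iff_not_imp_left, ← hcard]
  push Not
  exact hl G'.verts G'.coe hG'

/-- For every finite simple graph `H` with at least one edge, there exists an integer `d` such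
that every finite simple `H`-minor-free graph is `(τ(H), d)`-colourable. -/
theorem stmt14 {α : Type} [Fintype α] (H : SimpleGraph α) (hH : H.edgeSet.Nonempty) :
    ∃ d : ℕ, ∀ (V : Type) [Fintype V] (G : SimpleGraph V),
      ¬ IsMinor H G → DefColorable G (vertexCoverNumber H) d :=
  (stmt14_general H hH).imp fun _ hd V _ G hG => (hd V G hG).defColorable
end

section
/- Let H be a finite simple graph with at least one edge. Then there exists an integer d such that every finite simple graph with no H minor is (1, d)-colourable if and only if H is isomorphic to the disjoint union of a star K_{1,k} for some k ≥ 1 and some (possibly zero) number of isolated vertices. -/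
/-!
With a single colour, `(1, d)`-colourability just bounds all degrees by `d`, and both sides of the
equivalence say that `H` is finite and that some single vertex `a` covers all edges of `H`.

If `a` covers all edges of `H`, then `H` embeds into every graph with a vertex `v` of degree at
least `|V(H)|`: send `a` to `v` and the other vertices to neighbours of `v`. Conversely, `K_{1,d+1}`
has a vertex of degree `d + 1`, so it must have `H` as a minor; since the branch sets are disjoint,
taking minors does not increase the vertex cover number, which is at most `1` for a star.
-/

open SimpleGraph

universe u v

lemma encard_setOf_inter_nonempty_le {ι β : Type*} {B : ι → Set β}
    (hB : Pairwise fun i j => Disjoint (B i) (B j)) (C : Set β) :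
    {i | (B i ∩ C).Nonempty}.encard ≤ C.encard := by
  have hmem (i : {i | (B i ∩ C).Nonempty}) : ∃ x : C, (x : β) ∈ B i := by
    obtain ⟨i, x, hxB, hxC⟩ := i
    exact ⟨⟨x, hxC⟩, hxB⟩
  choose f hf using hmem
  have hinj : Function.Injective f := fun i j hij => by
    by_contra hne
    exact Set.disjoint_left.1 (hB (Subtype.coe_ne_coe.2 hne)) (hf i) (hij ▸ hf j)
  exact (Function.Embedding.mk f hinj).encard_le

lemma exists_equiv_fin_apply_eq_zero {β : Type*} {n : ℕ} (h : Nat.card β = n + 1) (b : β) :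
    ∃ e : β ≃ Fin (n + 1), e b = 0 := by
  have : Finite β := Nat.finite_of_card_ne_zero (by omega)
  let e := Finite.equivFinOfCardEq h
  exact ⟨e.trans (Equiv.swap (e b) 0), by simp⟩

section Minor

variable {V α : Type*} {G : SimpleGraph V} {H : SimpleGraph α}

lemma defColorable_one_iff {d : ℕ} :
    DefColorable G 1 d ↔ ∀ v, (G.neighborSet v).ncard ≤ d := by
  have monochromatic (c : V → Fin 1) (v : V) :
      {w | G.Adj v w ∧ c w = c v} = G.neighborSet v := by
    ext w
    simp [Subsingleton.elim (c w) (c v)]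
  simp only [DefColorable, monochromatic, exists_const]

lemma isMinor_of_isContained (h : H ⊑ G) : IsMinor H G := by
  obtain ⟨f⟩ := h
  refine ⟨fun a => {f a}, fun a => Set.singleton_nonempty _,
    fun a => Connected.of_subsingleton, fun a b hab => ?_,
    fun a b hab => ⟨f a, rfl, f b, rfl, f.toHom.map_adj hab⟩⟩
  simpa using f.injective.ne hab

lemma IsMinor.finite [Finite V] (h : IsMinor H G) : Finite α := by
  obtain ⟨B, hne, -, hdisj, -⟩ := h
  have hcard := encard_setOf_inter_nonempty_le hdisj Set.univ
  simp only [Set.inter_univ, hne, Set.ofPred_true] at hcard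
  exact Set.finite_univ_iff.1 (Set.finite_univ.finite_of_encard_le hcard)

lemma IsMinor.vertexCoverNum_le (h : IsMinor H G) : H.vertexCoverNum ≤ G.vertexCoverNum := by
  obtain ⟨B, -, -, hdisj, hB⟩ := h
  obtain ⟨C, hcard, hC⟩ := G.vertexCoverNum_exists
  have hcover : H.IsVertexCover {a | (B a ∩ C).Nonempty} := fun a b hab => by
    obtain ⟨x, hx, y, hy, hxy⟩ := hB a b hab
    exact (hC hxy).imp (fun h => ⟨x, hx, h⟩) (fun h => ⟨y, hy, h⟩)
  calc H.vertexCoverNum ≤ {a | (B a ∩ C).Nonempty}.encard := hcover.vertexCoverNum_le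
    _ ≤ C.encard := encard_setOf_inter_nonempty_le hdisj C
    _ = G.vertexCoverNum := hcard

lemma isContained_of_isVertexCover_singleton [Finite α] {a : α} (ha : H.IsVertexCover {a})
    (v : V) (hv : ({a}ᶜ : Set α).encard ≤ (G.neighborSet v).encard) : H ⊑ G := by
  classical
  have : Nonempty V := ⟨v⟩
  obtain ⟨g, hg, hinj⟩ := (Set.toFinite ({a}ᶜ : Set α)).exists_injOn_of_encard_le hv
  have hadj {x : α} (hx : x ≠ a) : G.Adj v (g x) := hg hx
  refine ⟨⟨⟨Function.update g a v, fun {x y} hxy => ?_⟩, fun x y hxy => ?_⟩⟩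
  · rcases ha hxy with rfl | rfl
    · simpa [hxy.ne'] using hadj hxy.ne'
    · simpa [hxy.ne] using (hadj hxy.ne).symm
  · by_cases hx : x = a <;> by_cases hy : y = a
    · rw [hx, hy]
    · simp [hx, hy, (hadj hy).ne] at hxy
    · simp [hx, hy, (hadj hx).ne'] at hxy
    · exact hinj hx hy (by simpa [hx, hy] using hxy)

end Minor

lemma isVertexCover_starPlusIsolated (k m : ℕ) :
    (StarPlusIsolated k m).IsVertexCover {Sum.inl 0} := by
  rintro (i | i) (j | j) <;> simp [StarPlusIsolated]

lemma neighborSet_starPlusIsolated_inl_zero (k m : ℕ) :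
    (StarPlusIsolated k m).neighborSet (Sum.inl 0) = Sum.inl '' {0}ᶜ := by
  ext (i | i) <;> simp [StarPlusIsolated, eq_comm]

lemma not_defColorable_starPlusIsolated {k d : ℕ} (m : ℕ) (h : d < k) :
    ¬ DefColorable (StarPlusIsolated k m) 1 d := by
  rw [defColorable_one_iff, not_forall]
  refine ⟨Sum.inl 0, ?_⟩
  rw [neighborSet_starPlusIsolated_inl_zero, Set.ncard_image_of_injective _ Sum.inl_injective,
    Set.ncard_compl]
  simpa using h

/-- The isomorphism between graphs whose edges are covered by a single vertex `a`, respectively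
`b`, given by a bijection that preserves the centre and its neighbours. -/
def isoOfIsVertexCoverSingleton {α β : Type*} {H : SimpleGraph α} {K : SimpleGraph β} {a : α}
    {b : β} (ha : H.IsVertexCover {a}) (hb : K.IsVertexCover {b}) (e : α ≃ β) (hab : e a = b)
    (hadj : ∀ x, K.Adj b (e x) ↔ H.Adj a x) : H ≃g K where
  toEquiv := e
  map_rel_iff' {x y} := by
    subst hab
    constructor <;> intro hxy
    · rcases hb hxy with h | h
      · obtain rfl := e.injective h
        exact (hadj y).1 hxy
      · obtain rfl := e.injective h
        exact ((hadj x).1 hxy.symm).symm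
    · rcases ha hxy with rfl | rfl
      · exact (hadj y).2 hxy
      · exact ((hadj x).2 hxy.symm).symm

lemma nonempty_iso_starPlusIsolated {α : Type*} [Finite α] {H : SimpleGraph α} {a : α}
    (ha : H.IsVertexCover {a}) :
    Nonempty (H ≃g StarPlusIsolated (H.neighborSet a).ncard
      (insert a (H.neighborSet a))ᶜ.ncard) := by
  classical
  set s := insert a (H.neighborSet a)
  have has : a ∈ s := Set.mem_insert _ _
  have hcard : Nat.card s = (H.neighborSet a).ncard + 1 :=
    Set.ncard_insert_of_notMem H.notMem_neighborSet_self
  obtain ⟨e₁, he₁⟩ := exists_equiv_fin_apply_eq_zero hcard ⟨a, has⟩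
  let e₂ : ↥sᶜ ≃ Fin sᶜ.ncard := Finite.equivFinOfCardEq rfl
  let e := (Equiv.Set.sumCompl s).symm.trans (e₁.sumCongr e₂)
  have he_of_mem {x : α} (hx : x ∈ s) : e x = Sum.inl (e₁ ⟨x, hx⟩) := by
    simp [e, Equiv.Set.sumCompl_symm_apply_of_mem hx]
  have he_of_notMem {x : α} (hx : x ∉ s) : e x = Sum.inr (e₂ ⟨x, hx⟩) := by
    simp [e, Equiv.Set.sumCompl_symm_apply_of_notMem hx]
  refine ⟨isoOfIsVertexCoverSingleton ha (isVertexCover_starPlusIsolated _ _) e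
    (by rw [he_of_mem has, he₁]) fun x => ?_⟩
  rw [← mem_neighborSet, neighborSet_starPlusIsolated_inl_zero]
  by_cases hx : x ∈ s
  · rw [he_of_mem hx, Sum.inl_injective.mem_set_image, ← he₁, Set.mem_compl_singleton_iff,
      e₁.injective.ne_iff, Ne, Subtype.mk.injEq]
    exact ⟨hx.resolve_left, fun h => h.ne'⟩
  · have hnadj : ¬ H.Adj a x := fun h => hx (Set.mem_insert_of_mem _ h)
    simp [he_of_notMem hx, hnadj]

lemma exists_iso_starPlusIsolated_iff {α : Type*} {H : SimpleGraph α} (hH : H.edgeSet.Nonempty) :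
    (∃ k m : ℕ, 1 ≤ k ∧ Nonempty (H ≃g StarPlusIsolated k m)) ↔
      Finite α ∧ ∃ a, H.IsVertexCover {a} := by
  constructor
  · rintro ⟨k, m, -, ⟨e⟩⟩
    refine ⟨Finite.of_equiv _ e.symm.toEquiv, e.symm (Sum.inl 0), ?_⟩
    simpa using (isVertexCover_image_iso e.symm).2 (isVertexCover_starPlusIsolated k m)
  · rintro ⟨_, a, ha⟩
    refine ⟨_, _, (Set.ncard_pos (Set.toFinite _)).2 ?_, nonempty_iso_starPlusIsolated ha⟩
    obtain ⟨⟨x, y⟩, hxy : H.Adj x y⟩ := hH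
    rcases ha hxy with rfl | rfl
    · exact ⟨y, hxy⟩
    · exact ⟨x, hxy.symm⟩

lemma exists_forall_defColorable_one_iff {α : Type*} [Nonempty α] {H : SimpleGraph α} :
    (∃ d : ℕ, ∀ (V : Type) [Fintype V] (G : SimpleGraph V),
        ¬ IsMinor H G → DefColorable G 1 d) ↔
      Finite α ∧ ∃ a, H.IsVertexCover {a} := by
  constructor
  · rintro ⟨d, hd⟩
    have hminor : IsMinor H (StarPlusIsolated (d + 1) 0) :=
      not_imp_comm.1 (hd _ _) (not_defColorable_starPlusIsolated 0 d.lt_succ_self)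
    have hnum : H.vertexCoverNum ≤ 1 := hminor.vertexCoverNum_le.trans <| by
      simpa using (isVertexCover_starPlusIsolated (d + 1) 0).vertexCoverNum_le
    obtain ⟨c, hc, hcover⟩ := exists_of_le_vertexCoverNum 1 hnum
      (mod_cast (ENat.one_le_card_iff_nonempty α).2 ‹_›)
    obtain ⟨a, rfl⟩ := Set.encard_eq_one.1 hc
    exact ⟨hminor.finite, a, hcover⟩
  · rintro ⟨_, a, ha⟩
    refine ⟨Nat.card α, fun V _ G hG => defColorable_one_iff.2 fun v => ?_⟩
    contrapose! hG
    refine isMinor_of_isContained (isContained_of_isVertexCover_singleton ha v ?_)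
    calc ({a}ᶜ : Set α).encard ≤ ENat.card α := Set.encard_le_card
      _ = Nat.card α := ENat.card_eq_coe_natCard α
      _ ≤ (G.neighborSet v).ncard := by exact_mod_cast hG.le
      _ ≤ (G.neighborSet v).encard := Set.ncard_le_encard _

theorem stmt16_general {α : Type*} (H : SimpleGraph α) (hH : H.edgeSet.Nonempty) :
    (∃ d : ℕ, ∀ (V : Type) [Fintype V] (G : SimpleGraph V),
        ¬ IsMinor H G → DefColorable G 1 d) ↔
    ∃ k m : ℕ, 1 ≤ k ∧ Nonempty (H ≃g StarPlusIsolated k m) := by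
  have : Nonempty α := hH.elim fun e _ => e.ind fun x _ => ⟨x⟩
  rw [exists_forall_defColorable_one_iff, exists_iso_starPlusIsolated_iff hH]

/-- For a finite simple graph `H` with at least one edge: there is an integer `d` such that
every `H`-minor-free finite simple graph is `(1, d)`-colourable, if and only if `H` is
isomorphic to a star `K_{1,k}` (`k ≥ 1`) together with some number of isolated vertices. -/
theorem stmt16 {α : Type} [Fintype α] (H : SimpleGraph α) (hH : H.edgeSet.Nonempty) :
    (∃ d : ℕ, ∀ (V : Type) [Fintype V] (G : SimpleGraph V),
        ¬ IsMinor H G → DefColorable G 1 d) ↔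
    ∃ k m : ℕ, 1 ≤ k ∧ Nonempty (H ≃g StarPlusIsolated k m) :=
  stmt16_general H hH
end
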